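/- arXiv:1005.3579 — 5 statements merged into one kernel-verified Lean document; each statement's English description precedes it below -/
import Mathlib

section
/- Fix a matrix C ∈ ℝ^{K×M} and μ > 0, and define f_μ : ℝ^{J×K} → ℝ by f_μ(B) = sup{⟨A, B C⟩ − (μ/2)‖A‖_F² : A ∈ ℝ^{J×M}, ‖A‖_∞ ≤ 1}. Then f_μ is differentiable at every B ∈ ℝ^{J×K} (with respect to the Frobenius inner product structure on matrices), and its gradient at B is ∇f_μ(B) = A* Cᵀ, where A* = S((B C)/μ) is the entrywise shrinkage of (B C)/μ. Equivalently, the Fréchet derivative of f_μ at B is the linear functional Δ ↦ ⟨A* Cᵀ, Δ⟩. -/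
/-!
The supremum separates over the entries of `A`: each scalar problem
`a ↦ a t - μ/2 a²` on `[-1, 1]` is concave and is maximised at the projection of its unconstrained
maximiser `t / μ`, which is `shrink μ t`. Hence `f_μ(B) = ∑ j m, envelope μ ((B C) j m)`.
The scalar value function `envelope μ` is a supremum of functions affine in `t`, so `shrink μ u` is
a subgradient at `u`; since `shrink μ` is Lipschitz with constant `1 / μ`, the subgradient
inequalities at `t` and at `u` give
`|envelope μ t - envelope μ u - shrink μ u * (t - u)| ≤ (t - u)² / μ`, i.e. differentiability.
The chain rule for the linear maps `B ↦ (B C) j m` concludes.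
-/

open Finset Matrix

attribute [local instance] Matrix.normedAddCommGroup Matrix.normedSpace

/-- The scalar shrinkage `S(t / μ)`. -/
noncomputable def shrink (μ t : ℝ) : ℝ := max (-1) (min 1 (t / μ))

/-- The value of `a t - μ/2 a²` at `a = shrink μ t` (a Huber function of `t`). -/
noncomputable def envelope (μ t : ℝ) : ℝ := shrink μ t * t - μ / 2 * shrink μ t ^ 2

lemma abs_shrink_le (μ t : ℝ) : |shrink μ t| ≤ 1 :=
  abs_le.2 ⟨le_max_left _ _, max_le (by norm_num) (min_le_left _ _)⟩

/-- `shrink μ t` maximises `a t - μ/2 a²` over `[-1, 1]`. -/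
lemma le_envelope {μ : ℝ} (hμ : 0 < μ) (t a : ℝ) (ha : |a| ≤ 1) :
    a * t - μ / 2 * a ^ 2 ≤ envelope μ t := by
  obtain ⟨h1, h2⟩ := abs_le.1 ha
  obtain ⟨r, rfl⟩ : ∃ r, t = μ * r := ⟨t / μ, by field_simp⟩
  have hr : μ * r / μ = r := by field_simp
  -- After the substitution `t = μ r` the factor `μ` splits off.
  suffices h : a * r - a ^ 2 / 2 ≤
      max (-1) (min 1 r) * r - max (-1) (min 1 r) ^ 2 / 2 by
    unfold envelope shrink
    rw [hr]
    nlinarith [mul_le_mul_of_nonneg_left h hμ.le]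
  rcases le_total 1 r with h | h
  · rw [min_eq_left h, max_eq_right (by norm_num)]
    nlinarith [mul_nonneg (sub_nonneg.2 h) (sub_nonneg.2 h2), sq_nonneg (a - 1)]
  · rw [min_eq_right h]
    rcases le_total (-1) r with h' | h'
    · rw [max_eq_right h']
      nlinarith [sq_nonneg (a - r)]
    · rw [max_eq_left h']
      nlinarith [mul_nonneg (sub_nonneg.2 h') (by linarith : 0 ≤ a + 1), sq_nonneg (a + 1)]

lemma abs_shrink_sub_le {μ : ℝ} (hμ : 0 < μ) (t u : ℝ) :
    |shrink μ t - shrink μ u| ≤ |t - u| / μ := by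
  have h1 := abs_max_sub_max_le_abs (min 1 (t / μ)) (min 1 (u / μ)) (-1)
  have h2 := abs_min_sub_min_le_max 1 (t / μ) 1 (u / μ)
  rw [sub_self, abs_zero, max_eq_right (abs_nonneg _), ← sub_div, abs_div, abs_of_pos hμ] at h2
  unfold shrink
  rw [max_comm (-1), max_comm (-1)]
  exact h1.trans h2

lemma hasDerivAt_envelope {μ : ℝ} (hμ : 0 < μ) (u : ℝ) :
    HasDerivAt (envelope μ) (shrink μ u) u := by
  rw [hasDerivAt_iff_isLittleO]
  refine Asymptotics.IsBigO.trans_isLittleO (g := fun t => ‖t - u‖ ^ 2) ?_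
    (Asymptotics.isLittleO_pow_sub_sub u (m := 2) (by norm_num))
  refine Asymptotics.IsBigO.of_bound μ⁻¹ (Filter.Eventually.of_forall fun t => ?_)
  have h1 := le_envelope hμ t _ (abs_shrink_le μ u)
  have h2 := le_envelope hμ u _ (abs_shrink_le μ t)
  have h3 : (shrink μ t - shrink μ u) * (t - u) ≤ μ⁻¹ * (t - u) ^ 2 := by
    calc _ ≤ |shrink μ t - shrink μ u| * |t - u| := by rw [← abs_mul]; exact le_abs_self _
      _ ≤ |t - u| / μ * |t - u| := by gcongr; exact abs_shrink_sub_le hμ t u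
      _ = μ⁻¹ * (t - u) ^ 2 := by rw [← sq_abs (t - u)]; ring
  rw [norm_pow, norm_norm, Real.norm_eq_abs, Real.norm_eq_abs, sq_abs, smul_eq_mul]
  have h4 : 0 ≤ μ⁻¹ * (t - u) ^ 2 := by positivity
  unfold envelope at *
  rw [abs_le]
  constructor <;> nlinarith

lemma sSup_eq_sum_envelope {J M : Type*} [Fintype J] [Fintype M] {μ : ℝ} (hμ : 0 < μ)
    (X : Matrix J M ℝ) :
    sSup {x : ℝ | ∃ A : Matrix J M ℝ, (∀ j m, |A j m| ≤ 1) ∧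
      x = (∑ j, ∑ m, A j m * X j m) - μ / 2 * (∑ j, ∑ m, (A j m) ^ 2)} =
    ∑ j, ∑ m, envelope μ (X j m) := by
  have key (A : Matrix J M ℝ) :
      (∑ j, ∑ m, A j m * X j m) - μ / 2 * (∑ j, ∑ m, (A j m) ^ 2) =
      ∑ j, ∑ m, (A j m * X j m - μ / 2 * A j m ^ 2) := by
    simp only [Finset.mul_sum, Finset.sum_sub_distrib]
  refine IsGreatest.csSup_eq ⟨⟨Matrix.of fun j m => shrink μ (X j m),
    fun j m => abs_shrink_le _ _, ?_⟩, ?_⟩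
  · rw [key]
    rfl
  · rintro _ ⟨A, hA, rfl⟩
    rw [key]
    exact Finset.sum_le_sum fun j _ => Finset.sum_le_sum fun m _ => le_envelope hμ _ _ (hA j m)

/-- The functional `B ↦ (B C) j m`; it is continuous because its domain is finite-dimensional. -/
noncomputable def mulEntry {J K M : Type*} [Fintype J] [Fintype K]
    (C : Matrix K M ℝ) (j : J) (m : M) : Matrix J K ℝ →L[ℝ] ℝ :=
  LinearMap.toContinuousLinearMap
    { toFun := fun B => (B * C) j m
      map_add' := fun x y => by simp [Matrix.add_mul]
      map_smul' := fun c x => by simp }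

/-- `f_μ` is differentiable at every `B`, with gradient `A* Cᵀ` where
`A* = S((B C)/μ)` is the entrywise shrinkage of `(B C)/μ`: the Fréchet derivative of
`f_μ` at `B` is the linear functional `Δ ↦ ⟨A* Cᵀ, Δ⟩`. -/
theorem stmt_4 {J K M : Type*} [Fintype J] [Fintype K] [Fintype M]
    [Nonempty J] [Nonempty K] [Nonempty M]
    (C : Matrix K M ℝ) (μ : ℝ) (hμ : 0 < μ) (B : Matrix J K ℝ) :
    ∃ L : Matrix J K ℝ →L[ℝ] ℝ,
      (∀ Δ : Matrix J K ℝ, L Δ = ∑ j, ∑ k,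
        ((Matrix.of fun j m => max (-1) (min 1 ((B * C) j m / μ))) * Cᵀ) j k * Δ j k) ∧
      HasFDerivAt (fun B' : Matrix J K ℝ =>
        sSup {x : ℝ | ∃ A : Matrix J M ℝ, (∀ j m, |A j m| ≤ 1) ∧
          x = (∑ j, ∑ m, A j m * (B' * C) j m) - μ / 2 * (∑ j, ∑ m, (A j m) ^ 2)})
        L B := by
  refine ⟨∑ j, ∑ m, shrink μ ((B * C) j m) • mulEntry C j m, fun Δ => ?_, ?_⟩
  · have h (j : J) (m : M) : mulEntry C j m Δ = ∑ k, Δ j k * C k m := rfl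
    simp only [_root_.sum_apply, _root_.smul_apply, h, smul_eq_mul,
      Matrix.mul_apply (N := Cᵀ), Matrix.of_apply, Matrix.transpose_apply, Finset.mul_sum,
      Finset.sum_mul]
    refine Finset.sum_congr rfl fun j _ => ?_
    rw [Finset.sum_comm]
    refine Finset.sum_congr rfl fun k _ => Finset.sum_congr rfl fun m _ => ?_
    rw [shrink]
    ring
  · simp only [sSup_eq_sum_envelope hμ]
    refine HasFDerivAt.fun_sum fun j _ => HasFDerivAt.fun_sum fun m _ => ?_
    have h : HasDerivAt (envelope μ) (shrink μ ((B * C) j m)) (mulEntry C j m B) :=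
      hasDerivAt_envelope hμ _
    exact h.comp_hasFDerivAt B (mulEntry C j m).hasFDerivAt
end

section
/- Fix a matrix C ∈ ℝ^{K×M} and μ > 0, and suppose c ≥ 0 is a constant such that ‖B C‖_F ≤ c · ‖B‖_F for every B ∈ ℝ^{J×K}. Then the gradient map of f_μ, namely B ↦ S((B C)/μ) Cᵀ (entrywise shrinkage of (BC)/μ, multiplied by Cᵀ), is Lipschitz continuous with constant c²/μ with respect to the Frobenius norm: for all B₁, B₂ ∈ ℝ^{J×K}, ‖S((B₁ C)/μ) Cᵀ − S((B₂ C)/μ) Cᵀ‖_F ≤ (c²/μ) · ‖B₁ − B₂‖_F. -/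
/-!
Write `S` for the entrywise shrinkage and `D = S(B₁C/μ) - S(B₂C/μ)`. The map `B ↦ BC` has operator
norm at most `c` for the Frobenius norms, hence so has its adjoint `D ↦ DCᵀ`
(`frobenius_adjoint_bound`), and the left side is `‖DCᵀ‖ ≤ c‖D‖`. Since clamping to `[-1, 1]` is
1-Lipschitz (`abs_shrink_sub_le`), `‖D‖ ≤ ‖(B₁ - B₂)C‖/μ ≤ (c/μ)‖B₁ - B₂‖`.
-/

open Finset Matrix

theorem abs_shrink_sub_le_s5 (x y : ℝ) :
    |max (-1) (min 1 x) - max (-1) (min 1 y)| ≤ |x - y| := by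
  have h1 := abs_max_sub_max_le_abs (min 1 x) (min 1 y) (-1)
  have h2 := abs_min_sub_min_le_max 1 x 1 y
  rw [max_comm (-1) (min 1 x), max_comm (-1) (min 1 y)]
  refine h1.trans (h2.trans ?_)
  simp

/-- Cauchy–Schwarz for the Frobenius inner product. -/
theorem frobenius_cauchy_schwarz {I L : Type*} [Fintype I] [Fintype L] (A B : Matrix I L ℝ) :
    ∑ i, ∑ l, A i l * B i l
      ≤ Real.sqrt (∑ i, ∑ l, (A i l) ^ 2) * Real.sqrt (∑ i, ∑ l, (B i l) ^ 2) := by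
  have h := Real.sum_mul_le_sqrt_mul_sqrt (Finset.univ : Finset (I × L))
    (fun p => A p.1 p.2) (fun p => B p.1 p.2)
  simpa only [Fintype.sum_prod_type] using h

/-- Right multiplication by `Cᵀ` is adjoint to right multiplication by `C` for the Frobenius
inner product. -/
theorem frobenius_adjoint {J K M : Type*} [Fintype J] [Fintype K] [Fintype M]
    (C : Matrix K M ℝ) (D : Matrix J M ℝ) (E : Matrix J K ℝ) :
    ∑ j, ∑ k, (D * Cᵀ) j k * E j k = ∑ j, ∑ m, D j m * (E * C) j m := by
  refine Finset.sum_congr rfl fun j _ => ?_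
  simp only [Matrix.mul_apply, Matrix.transpose_apply, Finset.sum_mul, Finset.mul_sum]
  rw [Finset.sum_comm]
  refine Finset.sum_congr rfl fun m _ => Finset.sum_congr rfl fun k _ => ?_
  ring

/-- A Frobenius bound for `B ↦ B * C` passes to its adjoint `D ↦ D * Cᵀ`. -/
theorem frobenius_adjoint_bound {J K M : Type*} [Fintype J] [Fintype K] [Fintype M]
    (C : Matrix K M ℝ) (c : ℝ) (hc : 0 ≤ c)
    (hbound : ∀ B : Matrix J K ℝ,
      Real.sqrt (∑ j, ∑ m, ((B * C) j m) ^ 2)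
        ≤ c * Real.sqrt (∑ j, ∑ k, (B j k) ^ 2)) (D : Matrix J M ℝ) :
    Real.sqrt (∑ j, ∑ k, ((D * Cᵀ) j k) ^ 2) ≤ c * Real.sqrt (∑ j, ∑ m, (D j m) ^ 2) := by
  set n := Real.sqrt (∑ j, ∑ k, ((D * Cᵀ) j k) ^ 2) with hn
  set d := Real.sqrt (∑ j, ∑ m, (D j m) ^ 2)
  have hd : 0 ≤ d := Real.sqrt_nonneg _
  -- `‖DCᵀ‖² = ⟪D, DCᵀC⟫ ≤ ‖D‖ ‖DCᵀC‖ ≤ ‖D‖ c ‖DCᵀ‖`; then cancel `‖DCᵀ‖`.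
  have key : n * n ≤ c * d * n := by
    calc n * n = ∑ j, ∑ k, (D * Cᵀ) j k * (D * Cᵀ) j k := by
          rw [hn, Real.mul_self_sqrt (by positivity)]
          simp only [sq]
      _ = ∑ j, ∑ m, D j m * (D * Cᵀ * C) j m := frobenius_adjoint C D (D * Cᵀ)
      _ ≤ d * Real.sqrt (∑ j, ∑ m, ((D * Cᵀ * C) j m) ^ 2) := frobenius_cauchy_schwarz _ _
      _ ≤ d * (c * n) := mul_le_mul_of_nonneg_left (hbound _) hd
      _ = c * d * n := by ring
  rcases (Real.sqrt_nonneg _ : 0 ≤ n).eq_or_lt with h0 | h0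
  · rw [hn, ← h0]
    positivity
  · exact le_of_mul_le_mul_right key h0

/-- If `‖B C‖_F ≤ c ‖B‖_F` for all `B`, then the gradient map
`B ↦ S((B C)/μ) Cᵀ` is Lipschitz with constant `c²/μ` in the Frobenius norm. -/
theorem stmt_5 {J K M : Type*} [Fintype J] [Fintype K] [Fintype M]
    [Nonempty J] [Nonempty K] [Nonempty M]
    (C : Matrix K M ℝ) (μ : ℝ) (hμ : 0 < μ)
    (c : ℝ) (hc : 0 ≤ c)
    (hbound : ∀ B : Matrix J K ℝ,
      Real.sqrt (∑ j, ∑ m, ((B * C) j m) ^ 2)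
        ≤ c * Real.sqrt (∑ j, ∑ k, (B j k) ^ 2)) :
    ∀ B₁ B₂ : Matrix J K ℝ,
      Real.sqrt (∑ j, ∑ k,
        (((Matrix.of fun j m => max (-1) (min 1 ((B₁ * C) j m / μ))) * Cᵀ) j k
          - ((Matrix.of fun j m => max (-1) (min 1 ((B₂ * C) j m / μ))) * Cᵀ) j k) ^ 2)
        ≤ c ^ 2 / μ * Real.sqrt (∑ j, ∑ k, (B₁ j k - B₂ j k) ^ 2) := by
  intro B₁ B₂
  set S₁ : Matrix J M ℝ := Matrix.of fun j m => max (-1) (min 1 ((B₁ * C) j m / μ)) with hS₁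
  set S₂ : Matrix J M ℝ := Matrix.of fun j m => max (-1) (min 1 ((B₂ * C) j m / μ)) with hS₂
  have hadj := frobenius_adjoint_bound C c hc hbound (S₁ - S₂)
  have hB := hbound (B₁ - B₂)
  simp only [Matrix.sub_mul, Matrix.sub_apply] at hadj hB
  have hS : Real.sqrt (∑ j, ∑ m, (S₁ j m - S₂ j m) ^ 2)
      ≤ Real.sqrt (∑ j, ∑ m, ((B₁ * C) j m - (B₂ * C) j m) ^ 2) / μ := by
    rw [le_div_iff₀ hμ, ← Real.sqrt_sq hμ.le, ← Real.sqrt_mul (by positivity)]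
    refine Real.sqrt_le_sqrt ?_
    simp only [Finset.sum_mul]
    refine Finset.sum_le_sum fun j _ => Finset.sum_le_sum fun m _ => ?_
    rw [← mul_pow]
    refine sq_le_sq.mpr ?_
    rw [abs_mul, abs_of_pos hμ, ← le_div_iff₀ hμ]
    have h := abs_shrink_sub_le_s5 ((B₁ * C) j m / μ) ((B₂ * C) j m / μ)
    rwa [← sub_div, abs_div, abs_of_pos hμ] at h
  calc _ ≤ c * Real.sqrt (∑ j, ∑ m, (S₁ j m - S₂ j m) ^ 2) := hadj
    _ ≤ c * (c * Real.sqrt (∑ j, ∑ k, (B₁ j k - B₂ j k) ^ 2) / μ) := by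
        refine mul_le_mul_of_nonneg_left (hS.trans ?_) hc
        gcongr
    _ = c ^ 2 / μ * Real.sqrt (∑ j, ∑ k, (B₁ j k - B₂ j k) ^ 2) := by ring
end

section
/- Fix a matrix C ∈ ℝ^{K×M} and μ ≥ 0, and define f_μ(B) = sup{⟨A, B C⟩ − (μ/2)‖A‖_F² : A ∈ ℝ^{J×M}, ‖A‖_∞ ≤ 1}. Then for every B ∈ ℝ^{J×K}: f_μ(B) ≤ ‖B C‖₁ ≤ f_μ(B) + μ · D, where D = (card J)·(card M)/2. -/
/-!
Each `A` with `‖A‖_∞ ≤ 1` satisfies `⟨A, X⟩ ≤ ‖X‖₁`, and subtracting the nonnegative penalty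
`(μ/2)‖A‖_F²` only decreases the left side; this gives the lower estimate, and also shows that the
set defining the supremum is bounded above. For the upper estimate, the sign matrix of `X = B C`
attains `⟨A, X⟩ = ‖X‖₁`, while its penalty is at most `μ/2` times the number of entries.
-/

open Finset

/-- The smooth approximation `f_μ` satisfies
`f_μ(B) ≤ ‖B C‖₁ ≤ f_μ(B) + μ D` with `D = (card J)(card M)/2`. -/
theorem stmt_6 {J K M : Type*} [Fintype J] [Fintype K] [Fintype M]
    [Nonempty J] [Nonempty K] [Nonempty M]
    (C : Matrix K M ℝ) (μ : ℝ) (hμ : 0 ≤ μ) (B : Matrix J K ℝ) :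
    sSup {x : ℝ | ∃ A : Matrix J M ℝ, (∀ j m, |A j m| ≤ 1) ∧
        x = (∑ j, ∑ m, A j m * (B * C) j m) - μ / 2 * (∑ j, ∑ m, (A j m) ^ 2)}
      ≤ ∑ j, ∑ m, |(B * C) j m| ∧
    (∑ j, ∑ m, |(B * C) j m|)
      ≤ sSup {x : ℝ | ∃ A : Matrix J M ℝ, (∀ j m, |A j m| ≤ 1) ∧
          x = (∑ j, ∑ m, A j m * (B * C) j m) - μ / 2 * (∑ j, ∑ m, (A j m) ^ 2)}
        + μ * ((Fintype.card J : ℝ) * (Fintype.card M : ℝ) / 2) := by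
  set X := B * C
  have hle : ∀ x ∈ {x : ℝ | ∃ A : Matrix J M ℝ, (∀ j m, |A j m| ≤ 1) ∧
      x = (∑ j, ∑ m, A j m * X j m) - μ / 2 * (∑ j, ∑ m, (A j m) ^ 2)},
      x ≤ ∑ j, ∑ m, |X j m| := by
    rintro x ⟨A, hA, rfl⟩
    have h1 : ∑ j, ∑ m, A j m * X j m ≤ ∑ j, ∑ m, |X j m| := by
      refine sum_le_sum fun j _ => sum_le_sum fun m _ => ?_
      calc A j m * X j m ≤ |A j m| * |X j m| := by
            rw [← abs_mul]; exact le_abs_self _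
        _ ≤ |X j m| := mul_le_of_le_one_left (abs_nonneg _) (hA j m)
    have h2 : 0 ≤ μ / 2 * ∑ j, ∑ m, (A j m) ^ 2 := by positivity
    linarith
  refine ⟨csSup_le ⟨_, 0, by simp, rfl⟩ hle, ?_⟩
  have hsign : ∀ y : ℝ, |(SignType.sign y : ℝ)| ≤ 1 := by
    intro y
    cases SignType.sign y <;> simp
  have hmem := le_csSup ⟨_, hle⟩
    ⟨fun j m => (SignType.sign (X j m) : ℝ), fun j m => hsign _, rfl⟩
  simp only [sign_mul_self] at hmem
  have hcard : ∑ j, ∑ m, (SignType.sign (X j m) : ℝ) ^ 2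
      ≤ (Fintype.card J : ℝ) * (Fintype.card M : ℝ) := by
    calc ∑ j, ∑ m, (SignType.sign (X j m) : ℝ) ^ 2 ≤ ∑ _j : J, ∑ _m : M, (1 : ℝ) :=
          sum_le_sum fun j _ => sum_le_sum fun m _ => (sq_le_one_iff_abs_le_one _).2 (hsign _)
      _ = _ := by simp
  have hpen := mul_le_mul_of_nonneg_left hcard (div_nonneg hμ zero_le_two)
  linarith
end

section
/- (Accelerated gradient method guarantee.) Let H be a real inner product space (finite-dimensional), let f : H → ℝ be convex and differentiable with gradient map g : H → H, and let L_U > 0 be such that g is Lipschitz continuous with constant L_U. Define sequences (W^t), (B^t), (Z^t) in H by: W⁰ = 0; for each t ≥ 0, B^t = W^t − (1/L_U) g(W^t), Z^t = −(1/L_U) Σ_{i=0}^{t} ((i+1)/2) g(W^i), and W^{t+1} = ((t+1)/(t+3)) B^t + (2/(t+3)) Z^t. Then for every B ∈ H and every integer t ≥ 1: f(B^t) − f(B) ≤ 2 L_U ‖B‖² / t². -/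
/-!
The proof is the estimate-sequence (potential function) argument. Put `α_t = (t + 1) / 2` and
`A_t = α_0 + ⋯ + α_t = (t + 1) (t + 2) / 4`. The point `W^{t+1}` is the convex combination of
`B^t` and `Z^t` with weights `A_t / A_{t+1}` and `α_{t+1} / A_{t+1}`, the point `B^t` is a gradient
step from `W^t`, and `Z^{t+1} = Z^t - (α_{t+1} / L) g (W^{t+1})` is a mirror-descent step. For a
fixed comparison point `b` the potential

  `A_t (f (B^t) - f b) + (L / 2) ‖b - Z^t‖²`

does not increase with `t` (`accel_step`): the gradient step gains `‖g‖² / (2 L)` by the descent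
lemma (`descent_lemma`), the first-order convexity inequality (`convex_gradient_ineq`) is used
against both `b` and `B^t`, the inner products cancel by the choice of `W^{t+1}`, and the remaining
multiple of `‖g‖²` has the right sign because `α_t² ≤ A_t`. The potential is at most
`(L / 2) ‖b‖²` at `t = 0`, so `f (B^t) - f b ≤ 2 L ‖b‖² / ((t + 1) (t + 2))`.
-/

open Finset

section

variable {H : Type*} [NormedAddCommGroup H] [InnerProductSpace ℝ H] [CompleteSpace H]

lemma hasDerivAt_comp_line {f : H → ℝ} {g : H → H} (hgrad : ∀ x, HasGradientAt f (g x) x)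
    (x v : H) (s : ℝ) :
    HasDerivAt (fun r : ℝ => f (x + r • v)) (inner ℝ (g (x + s • v)) v) s := by
  have h1 : HasDerivAt (fun r : ℝ => x + r • v) v s := by
    simpa using ((hasDerivAt_id s).smul_const v).const_add x
  have h2 := (hgrad (x + s • v)).hasFDerivAt.comp_hasDerivAt s h1
  simpa [Function.comp_def] using h2

/-- First-order characterisation of convexity: the graph of `f` lies above its tangents. -/
lemma convex_gradient_ineq {f : H → ℝ} {g : H → H} (hconv : ConvexOn ℝ Set.univ f)
    (hgrad : ∀ x, HasGradientAt f (g x) x) (x y : H) :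
    f x + inner ℝ (g x) (y - x) ≤ f y := by
  have hc : ConvexOn ℝ Set.univ (fun r : ℝ => f (x + r • (y - x))) := by
    have h := hconv.comp_affineMap (AffineMap.lineMap (k := ℝ) x y)
    simpa [Function.comp_def, AffineMap.lineMap_apply, add_comm] using h
  have hd := hasDerivAt_comp_line hgrad x (y - x) 0
  have h := hc.le_slope_of_hasDerivAt (Set.mem_univ 0) (Set.mem_univ 1) one_pos hd
  simp [slope_def_field] at h
  linarith

/-- The quadratic upper bound for a function with `L`-Lipschitz gradient. -/
lemma descent_lemma {f : H → ℝ} {g : H → H} (hgrad : ∀ x, HasGradientAt f (g x) x)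
    {L : ℝ} (hlip : ∀ x y, ‖g x - g y‖ ≤ L * ‖x - y‖) (x v : H) :
    f (x + v) ≤ f x + inner ℝ (g x) v + L / 2 * ‖v‖ ^ 2 := by
  -- The gap between `f` and its quadratic model is nonincreasing along the segment.
  have hd : ∀ s : ℝ, HasDerivAt
      (fun r : ℝ => f (x + r • v) - (r * inner ℝ (g x) v + L / 2 * ‖v‖ ^ 2 * r ^ 2))
      (inner ℝ (g (x + s • v)) v - (inner ℝ (g x) v + L * ‖v‖ ^ 2 * s)) s := by
    intro s
    have h1 := hasDerivAt_comp_line hgrad x v s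
    have h2 := ((hasDerivAt_id s).mul_const (inner ℝ (g x) v)).add
      (((hasDerivAt_id s).pow 2).const_mul (L / 2 * ‖v‖ ^ 2))
    refine (h1.sub h2).congr_deriv ?_
    simp only [id, one_mul, mul_one, Nat.cast_ofNat, Nat.add_one_sub_one, pow_one]
    ring
  have hanti := antitoneOn_of_deriv_nonpos (convex_Ici (0 : ℝ))
    (fun s _ => (hd s).continuousAt.continuousWithinAt)
    (fun s _ => (hd s).differentiableAt.differentiableWithinAt)
    (fun s hs => by
      rw [(hd s).deriv]
      have hs0 : 0 < s := by simpa using hs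
      have h1 : inner ℝ (g (x + s • v) - g x) v ≤ ‖g (x + s • v) - g x‖ * ‖v‖ :=
        real_inner_le_norm _ _
      have h2 := hlip (x + s • v) x
      rw [add_sub_cancel_left, norm_smul, Real.norm_of_nonneg hs0.le] at h2
      have h3 := mul_le_mul_of_nonneg_right h2 (norm_nonneg v)
      rw [inner_sub_left] at h1
      nlinarith)
  have h := hanti (Set.mem_Ici.2 le_rfl) (Set.mem_Ici.2 zero_le_one) zero_le_one
  simp at h
  linarith

/-- One step of the method does not increase the potential `A (f B - f b) + (L / 2) ‖b - Z‖²`,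
where the total weight grows from `A` to `A + α`. The case `A = 0` covers the initial step. -/
lemma accel_step {f : H → ℝ} {g : H → H} (hconv : ConvexOn ℝ Set.univ f)
    (hgrad : ∀ x, HasGradientAt f (g x) x) {L : ℝ} (hL : 0 < L)
    (hlip : ∀ x y, ‖g x - g y‖ ≤ L * ‖x - y‖)
    {A α : ℝ} (hA : 0 ≤ A) (hα : 0 ≤ α) (hαA : α ^ 2 ≤ A + α)
    (b B Z w : H) (hw : (A + α) • w = A • B + α • Z) :
    (A + α) * (f (w - (1 / L) • g w) - f b) + L / 2 * ‖b - (Z - (α / L) • g w)‖ ^ 2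
      ≤ A * (f B - f b) + L / 2 * ‖b - Z‖ ^ 2 := by
  have hdesc : f (w - (1 / L) • g w) ≤ f w - ‖g w‖ ^ 2 / (2 * L) := by
    have h := descent_lemma hgrad hlip w (-((1 / L) • g w))
    rw [← sub_eq_add_neg, inner_neg_right, real_inner_smul_right, real_inner_self_eq_norm_sq,
      norm_neg, norm_smul, Real.norm_of_nonneg (by positivity)] at h
    refine h.trans_eq ?_
    field_simp
    ring
  have hb := convex_gradient_ineq hconv hgrad w b
  have hBB := convex_gradient_ineq hconv hgrad w B
  have hnorm : L / 2 * ‖b - (Z - (α / L) • g w)‖ ^ 2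
      = L / 2 * ‖b - Z‖ ^ 2 + α * inner ℝ (g w) (b - Z) + α ^ 2 * (‖g w‖ ^ 2 / (2 * L)) := by
    rw [show b - (Z - (α / L) • g w) = (b - Z) + (α / L) • g w by abel, norm_add_sq_real,
      real_inner_smul_right, norm_smul, Real.norm_of_nonneg (by positivity),
      real_inner_comm]
    field_simp
  have hin : (A + α) * inner ℝ (g w) w = A * inner ℝ (g w) B + α * inner ℝ (g w) Z := by
    rw [← real_inner_smul_right, hw, inner_add_right, real_inner_smul_right,
      real_inner_smul_right]
  rw [inner_sub_right] at hb hBB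
  rw [hnorm, inner_sub_right]
  have e1 := mul_le_mul_of_nonneg_left hdesc (add_nonneg hA hα)
  have e2 := mul_le_mul_of_nonneg_left hb hα
  have e3 := mul_le_mul_of_nonneg_left hBB hA
  have e4 := mul_le_mul_of_nonneg_right hαA (by positivity : 0 ≤ ‖g w‖ ^ 2 / (2 * L))
  linarith

end

/-- Accelerated gradient method guarantee: for a convex differentiable `f` with
`L_U`-Lipschitz gradient `g`, the Nesterov iterates satisfy
`f(B^t) − f(B) ≤ 2 L_U ‖B‖² / t²` for all `B` and `t ≥ 1`. -/
theorem stmt_12 {H : Type*} [NormedAddCommGroup H] [InnerProductSpace ℝ H]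
    [FiniteDimensional ℝ H]
    (f : H → ℝ) (g : H → H)
    (hconv : ConvexOn ℝ Set.univ f)
    (hgrad : ∀ x, HasGradientAt f (g x) x)
    (LU : ℝ) (hLU : 0 < LU)
    (hlip : ∀ x y, ‖g x - g y‖ ≤ LU * ‖x - y‖)
    (W B Z : ℕ → H)
    (hW0 : W 0 = 0)
    (hB : ∀ t, B t = W t - (1 / LU) • g (W t))
    (hZ : ∀ t, Z t = -((1 / LU) • ∑ i ∈ Finset.range (t + 1), (((i : ℝ) + 1) / 2) • g (W i)))
    (hW : ∀ t, W (t + 1) = (((t : ℝ) + 1) / ((t : ℝ) + 3)) • B t + (2 / ((t : ℝ) + 3)) • Z t) :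
    ∀ (b : H) (t : ℕ), 1 ≤ t → f (B t) - f b ≤ 2 * LU * ‖b‖ ^ 2 / (t : ℝ) ^ 2 := by
  intro b t ht
  have hpot : ∀ t : ℕ, ((t : ℝ) + 1) * (t + 2) / 4 * (f (B t) - f b) + LU / 2 * ‖b - Z t‖ ^ 2
      ≤ LU / 2 * ‖b‖ ^ 2 := by
    intro t
    induction t with
    | zero =>
      have h := accel_step hconv hgrad hLU hlip (A := 0) (α := 1 / 2) le_rfl (by norm_num)
        (by norm_num) b 0 0 (W 0) (by simp [hW0])
      have hz : Z 0 = 0 - (1 / 2 / LU) • g (W 0) := by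
        rw [hZ]
        simp only [zero_add, Finset.sum_range_one, Nat.cast_zero, smul_smul, zero_sub]
        congr 2
        ring
      rw [← hB, ← hz] at h
      norm_num at h ⊢
      linarith
    | succ t ih =>
      have ht0 : (0 : ℝ) ≤ t := t.cast_nonneg
      have hw : (((t : ℝ) + 1) * (t + 2) / 4 + ((t : ℝ) + 2) / 2) • W (t + 1)
          = (((t : ℝ) + 1) * (t + 2) / 4) • B t + (((t : ℝ) + 2) / 2) • Z t := by
        rw [hW, smul_add, smul_smul, smul_smul]
        congr 2
        · field_simp
          ring
        · field_simp
          ring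
      have h := accel_step hconv hgrad hLU hlip (A := ((t : ℝ) + 1) * (t + 2) / 4)
        (α := ((t : ℝ) + 2) / 2) (by positivity) (by positivity) (by nlinarith)
        b (B t) (Z t) (W (t + 1)) hw
      have hz : Z (t + 1) = Z t - (((t : ℝ) + 2) / 2 / LU) • g (W (t + 1)) := by
        rw [hZ (t + 1), Finset.sum_range_succ, smul_add, neg_add, ← hZ t, smul_smul,
          sub_eq_add_neg]
        congr 3
        push_cast
        ring
      rw [← hB, ← hz] at h
      have e : (((t + 1 : ℕ) : ℝ) + 1) * ((t + 1 : ℕ) + 2) / 4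
          = ((t : ℝ) + 1) * (t + 2) / 4 + ((t : ℝ) + 2) / 2 := by
        push_cast
        ring
      rw [e]
      exact h.trans ih
  have htp : (0 : ℝ) < t := by exact_mod_cast ht
  have h := hpot t
  have h0 : 0 ≤ LU / 2 * ‖b - Z t‖ ^ 2 := by positivity
  rw [le_div_iff₀ (by positivity)]
  -- When `f (B t) < f b` the claim holds by sign; otherwise use `t² ≤ (t + 1) (t + 2)`.
  rcases le_total (f (B t) - f b) 0 with hneg | hpos
  · have : 0 ≤ 2 * LU * ‖b‖ ^ 2 := by positivity
    nlinarith [mul_nonneg (neg_nonneg.2 hneg) (sq_nonneg (t : ℝ))]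
  · nlinarith [mul_nonneg hpos htp.le]
end

section
/- Fix matrices X ∈ ℝ^{N×J}, Y ∈ ℝ^{N×K}, C ∈ ℝ^{K×M}, a constant μ > 0, and a constant L_U > 0. Define f(B) = (1/2)‖Y − XB‖_F² + ‖B C‖₁ and f̃(B) = (1/2)‖Y − XB‖_F² + f_μ(B), and let D = (card J)(card M)/2. Let B* be a global minimizer of f over ℝ^{J×K}, and suppose (B^t)_{t≥1} is a sequence of matrices satisfying the Nesterov-type guarantee f̃(B^t) − f̃(B) ≤ 2 L_U ‖B‖_F² / t² for every B ∈ ℝ^{J×K} and t ≥ 1. Then for every t ≥ 1: f(B^t) − f(B*) ≤ μ D + 2 L_U ‖B*‖_F² / t². -/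
/-!
The smoothing `f_μ` is uniformly close to the `ℓ₁`-norm: writing `G = B C`,
`‖G‖₁ - μ D ≤ f_μ(B) ≤ ‖G‖₁` with `D = (card J)(card M) / 2`. The upper bound is the duality of the
`ℓ₁` and `ℓ∞` norms together with the sign of the quadratic term; the lower bound is obtained from
the competitor `A = sign G`, for which `⟨A, G⟩ = ‖G‖₁` and `‖A‖_F² ≤ (card J)(card M)`.
Therefore `f̃ ≤ f ≤ f̃ + μ D`, and
`f(B^t) - f(B*) ≤ μ D + f̃(B^t) - f̃(B*)`, to which the guarantee at `B = B*` applies.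
-/

open Finset

/-- The feasible dual values, whose supremum is the smoothed `ℓ₁`-norm of `G`, are bounded by
`‖G‖₁`. -/
lemma smoothed_value_le {J M : Type*} [Fintype J] [Fintype M] (G A : Matrix J M ℝ) {μ : ℝ}
    (hμ : 0 < μ) (hA : ∀ j m, |A j m| ≤ 1) :
    (∑ j, ∑ m, A j m * G j m) - μ / 2 * (∑ j, ∑ m, (A j m) ^ 2) ≤ ∑ j, ∑ m, |G j m| := by
  have h1 : ∑ j, ∑ m, A j m * G j m ≤ ∑ j, ∑ m, |G j m| := by
    refine Finset.sum_le_sum fun j _ => Finset.sum_le_sum fun m _ => ?_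
    calc A j m * G j m ≤ |A j m * G j m| := le_abs_self _
      _ = |A j m| * |G j m| := abs_mul _ _
      _ ≤ |G j m| := mul_le_of_le_one_left (abs_nonneg _) (hA j m)
  have h2 : 0 ≤ μ / 2 * ∑ j, ∑ m, (A j m) ^ 2 := by positivity
  linarith

/-- The sign matrix of `G` is feasible and its dual value is within `μ D` of `‖G‖₁`. -/
lemma exists_smoothed_value_ge {J M : Type*} [Fintype J] [Fintype M] (G : Matrix J M ℝ) {μ : ℝ}
    (hμ : 0 < μ) :
    ∃ A : Matrix J M ℝ, (∀ j m, |A j m| ≤ 1) ∧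
      (∑ j, ∑ m, |G j m|) - μ * ((Fintype.card J : ℝ) * (Fintype.card M : ℝ) / 2) ≤
        (∑ j, ∑ m, A j m * G j m) - μ / 2 * (∑ j, ∑ m, (A j m) ^ 2) := by
  have hs : ∀ x : ℝ, |(SignType.sign x : ℝ)| ≤ 1 := by
    intro x
    rcases SignType.sign x with _ | _ | _ <;> simp
  refine ⟨fun j m => (SignType.sign (G j m) : ℝ), fun j m => hs _, ?_⟩
  have h2 : ∑ j, ∑ m, (SignType.sign (G j m) : ℝ) ^ 2 ≤
      (Fintype.card J : ℝ) * (Fintype.card M : ℝ) := by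
    calc ∑ j, ∑ m, (SignType.sign (G j m) : ℝ) ^ 2 ≤ ∑ _j : J, ∑ _m : M, (1 : ℝ) :=
          Finset.sum_le_sum fun j _ => Finset.sum_le_sum fun m _ =>
            (sq_le_one_iff_abs_le_one _).2 (hs _)
      _ = _ := by simp
  have h3 := mul_le_mul_of_nonneg_left h2 (half_pos hμ).le
  simp only [sign_mul_self]
  linarith

/-- If `B*` is a global minimizer of `f(B) = (1/2)‖Y − XB‖_F² + ‖BC‖₁` and the sequence
`(B^t)` satisfies the Nesterov guarantee for the smoothed objective `f̃`, then
`f(B^t) − f(B*) ≤ μD + 2 L_U ‖B*‖_F² / t²`. -/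
theorem stmt_13 {N J K M : Type*} [Fintype N] [Fintype J] [Fintype K] [Fintype M]
    [Nonempty N] [Nonempty J] [Nonempty K] [Nonempty M]
    (X : Matrix N J ℝ) (Y : Matrix N K ℝ) (C : Matrix K M ℝ)
    (μ LU : ℝ) (hμ : 0 < μ) (hLU : 0 < LU)
    (f ftilde : Matrix J K ℝ → ℝ)
    (hf : ∀ B, f B = 1 / 2 * ∑ n, ∑ k, ((Y - X * B) n k) ^ 2
        + ∑ j, ∑ m, |(B * C) j m|)
    (hft : ∀ B, ftilde B = 1 / 2 * ∑ n, ∑ k, ((Y - X * B) n k) ^ 2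
        + sSup {x : ℝ | ∃ A : Matrix J M ℝ, (∀ j m, |A j m| ≤ 1) ∧
            x = (∑ j, ∑ m, A j m * (B * C) j m) - μ / 2 * (∑ j, ∑ m, (A j m) ^ 2)})
    (D : ℝ) (hD : D = (Fintype.card J : ℝ) * (Fintype.card M : ℝ) / 2)
    (Bstar : Matrix J K ℝ) (hmin : ∀ B' : Matrix J K ℝ, f Bstar ≤ f B')
    (Bseq : ℕ → Matrix J K ℝ)
    (hguar : ∀ (B : Matrix J K ℝ) (t : ℕ), 1 ≤ t →
      ftilde (Bseq t) - ftilde B ≤ 2 * LU * (∑ j, ∑ k, (B j k) ^ 2) / (t : ℝ) ^ 2) :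
    ∀ t : ℕ, 1 ≤ t →
      f (Bseq t) - f Bstar
        ≤ μ * D + 2 * LU * (∑ j, ∑ k, (Bstar j k) ^ 2) / (t : ℝ) ^ 2 := by
  intro t ht
  have upper : ftilde Bstar ≤ f Bstar := by
    rw [hf, hft]
    refine add_le_add_right ?_ _
    refine csSup_le ⟨_, 0, by simp, rfl⟩ ?_
    rintro x ⟨A, hA, rfl⟩
    exact smoothed_value_le _ A hμ hA
  have lower : f (Bseq t) - μ * D ≤ ftilde (Bseq t) := by
    obtain ⟨A, hA, hle⟩ := exists_smoothed_value_ge (Bseq t * C) hμ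
    rw [hf, hft, hD, add_sub_assoc]
    refine add_le_add_right ?_ _
    refine hle.trans (le_csSup ?_ ⟨A, hA, rfl⟩)
    refine ⟨∑ j, ∑ m, |(Bseq t * C) j m|, ?_⟩
    rintro x ⟨A, hA, rfl⟩
    exact smoothed_value_le _ A hμ hA
  have := hguar Bstar t ht
  linarith
end
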